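/- arXiv:2602.14206 — 2 statements merged into one kernel-verified Lean document; each statement's English description precedes it below -/
import Mathlib

section
/- Let n ≥ 3, let (b_{ij})_{1≤i,j≤n} be a real array with Σ_{s≠r} b_{rs} = 0 for every r, let π be a uniformly distributed random permutation of {1,…,n}, and let i, j, ℓ be three distinct indices. Then E[ b_{π(i)π(j)} b_{π(i)π(ℓ)} ] = −μ₂/(n−2), where μ₂ = (1/(n(n−1))) Σ_{r≠s} b_{rs}². -/
open Finset

/-- Expectation with respect to a uniformly distributed random permutation of `{1, …, n}`:
the average of `f` over the symmetric group on `Fin n`. -/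
noncomputable def permE (n : ℕ) (f : Equiv.Perm (Fin n) → ℝ) : ℝ :=
  (∑ π : Equiv.Perm (Fin n), f π) / (Nat.factorial n)

/-! Given the images of a set `s` of indices, the image of any further index is uniformly
distributed over the remaining values. With `s = {i, j}` this averages `b (π i) v` over the `n - 2`
values `v` other than `π i` and `π j`; as the row sums vanish, that average is
`-b (π i) (π j) / (n - 2)`. What remains is the mean of `b (π i) (π j) ^ 2`, which is `μ₂` by the
same principle with `s = {i}` and `s = ∅`. -/

open scoped BigOperators

lemma permE_eq_expect (n : ℕ) (f : Equiv.Perm (Fin n) → ℝ) : permE n f = 𝔼 π, f π := by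
  rw [permE, Fintype.expect_eq_sum_div_card, Fintype.card_perm, Fintype.card_fin]

section PermutationAverages

variable {α M : Type*} [Fintype α] [DecidableEq α] [AddCommMonoid M] [Module ℚ≥0 M]

lemma expect_perm_apply_eq_of_notMem {s : Finset α} {x y : α} (hx : x ∉ s) (hy : y ∉ s)
    {F : (α → α) → α → M} (hF : DependsOn F s) :
    𝔼 π : Equiv.Perm α, F π (π x) = 𝔼 π : Equiv.Perm α, F π (π y) := by
  refine Fintype.expect_equiv (Equiv.mulRight (Equiv.swap x y)) _ _ fun π => ?_
  have hfix : F (π * Equiv.swap x y : Equiv.Perm α) = F π := hF fun a ha => by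
    have hax : a ≠ x := ne_of_mem_of_not_mem ha hx
    have hay : a ≠ y := ne_of_mem_of_not_mem ha hy
    rw [Equiv.Perm.mul_apply, Equiv.swap_apply_of_ne_of_ne hax hay]
  rw [Equiv.coe_mulRight, hfix, Equiv.Perm.mul_apply, Equiv.swap_apply_right]

theorem expect_perm_apply_of_notMem {s : Finset α} {x : α} (hx : x ∉ s)
    {F : (α → α) → α → M} (hF : DependsOn F s) :
    𝔼 π : Equiv.Perm α, F π (π x) = 𝔼 π : Equiv.Perm α, 𝔼 v ∈ (s.image π)ᶜ, F π v := by
  have hne : sᶜ.Nonempty := ⟨x, mem_compl.2 hx⟩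
  calc 𝔼 π : Equiv.Perm α, F π (π x)
      = 𝔼 y ∈ sᶜ, 𝔼 π : Equiv.Perm α, F π (π y) := by
        rw [← expect_const hne (𝔼 π : Equiv.Perm α, F π (π x))]
        exact expect_congr rfl fun y hy =>
          expect_perm_apply_eq_of_notMem hx (mem_compl.1 hy) hF
    _ = 𝔼 π : Equiv.Perm α, 𝔼 y ∈ sᶜ, F π (π y) := expect_comm ..
    _ = 𝔼 π : Equiv.Perm α, 𝔼 v ∈ (s.image π)ᶜ, F π v :=
        expect_congr rfl fun π _ => expect_equiv π (by simp) fun _ _ => rfl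

lemma expect_perm_apply (f : α → M) (i : α) :
    𝔼 π : Equiv.Perm α, f (π i) = 𝔼 r, f r := by
  simpa using expect_perm_apply_of_notMem (notMem_empty i) (F := fun _ => f) fun _ _ _ => rfl

lemma expect_perm_apply_apply (f : α → α → M) {i j : α} (hij : i ≠ j) :
    𝔼 π : Equiv.Perm α, f (π i) (π j) = 𝔼 r, 𝔼 s ∈ {r}ᶜ, f r s := by
  have hF : DependsOn (fun σ : α → α => f (σ i)) ({i} : Finset α) := fun σ τ h => by
    simp only [h i (by simp)]
  rw [expect_perm_apply_of_notMem (by simpa using hij.symm) hF]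
  simpa using expect_perm_apply (fun r => 𝔼 s ∈ {r}ᶜ, f r s) i

end PermutationAverages

lemma cast_card_compl_singleton {α R : Type*} [Fintype α] [DecidableEq α] [AddGroupWithOne R]
    (r : α) : (#({r}ᶜ : Finset α) : R) = Fintype.card α - 1 := by
  rw [← insert_empty_eq, compl_insert, compl_empty, cast_card_erase_of_mem (mem_univ r), card_univ]

section VanishingRowSums

variable {α K : Type*} [DecidableEq α] [Field K] [CharZero K]

lemma expect_erase_of_sum_eq_zero {t : Finset α} {a : α} (ha : a ∈ t) {f : α → K}
    (hf : ∑ v ∈ t, f v = 0) : 𝔼 v ∈ t.erase a, f v = -f a / (#t - 1) := by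
  rw [expect_eq_sum_div_card, sum_erase_eq_sub ha, hf, zero_sub, cast_card_erase_of_mem ha]

variable [Fintype α]

lemma expect_expect_compl_singleton (f : α → α → K) :
    𝔼 r, 𝔼 s ∈ {r}ᶜ, f r s =
      1 / ((Fintype.card α : K) * (Fintype.card α - 1)) * ∑ r, ∑ s ∈ {r}ᶜ, f r s := by
  simp only [expect_eq_sum_div_card, cast_card_compl_singleton, ← sum_div, card_univ]
  rw [div_div, mul_comm (Fintype.card α : K), one_div_mul_eq_div]

lemma expect_perm_mul_of_sum_eq_zero (b c : α → α → K) (hc : ∀ r, ∑ s ∈ {r}ᶜ, c r s = 0)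
    {i j l : α} (hij : i ≠ j) (hil : i ≠ l) (hjl : j ≠ l) :
    𝔼 π : Equiv.Perm α, b (π i) (π j) * c (π i) (π l) =
      -(𝔼 π : Equiv.Perm α, b (π i) (π j) * c (π i) (π j)) / (Fintype.card α - 2) := by
  have hl : l ∉ ({j, i} : Finset α) := by simp [hil.symm, hjl.symm]
  have hF : DependsOn (fun (σ : α → α) v => b (σ i) (σ j) * c (σ i) v) ({j, i} : Finset α) :=
    fun σ τ h => by simp only [h i (by simp), h j (by simp)]
  rw [expect_perm_apply_of_notMem hl hF, ← expect_neg_distrib, expect_div]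
  refine expect_congr rfl fun π _ => ?_
  have hj : π j ∈ ({π i}ᶜ : Finset α) := by simpa using hij.symm
  calc 𝔼 v ∈ (({j, i} : Finset α).image π)ᶜ, b (π i) (π j) * c (π i) v
      = b (π i) (π j) * 𝔼 v ∈ ({π i}ᶜ : Finset α).erase (π j), c (π i) v := by
        rw [image_insert, image_singleton, compl_insert, mul_expect]
    _ = b (π i) (π j) * (-c (π i) (π j) / (Fintype.card α - 1 - 1)) := by
        rw [expect_erase_of_sum_eq_zero hj (hc (π i)), cast_card_compl_singleton]
    _ = -(b (π i) (π j) * c (π i) (π j)) / (Fintype.card α - 2) := by ring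

theorem stmt6_general (b c : α → α → K) (hc : ∀ r, ∑ s ∈ {r}ᶜ, c r s = 0)
    {i j l : α} (hij : i ≠ j) (hil : i ≠ l) (hjl : j ≠ l) :
    𝔼 π : Equiv.Perm α, b (π i) (π j) * c (π i) (π l) =
      -(1 / ((Fintype.card α : K) * (Fintype.card α - 1)) * ∑ r, ∑ s ∈ {r}ᶜ, b r s * c r s) /
        (Fintype.card α - 2) := by
  rw [expect_perm_mul_of_sum_eq_zero b c hc hij hil hjl,
    expect_perm_apply_apply (fun r s => b r s * c r s) hij, expect_expect_compl_singleton]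

end VanishingRowSums

/-- one shared index. For a uniformly distributed random permutation `π` and
distinct indices `i, j, ℓ`, `E[b_{π(i)π(j)} b_{π(i)π(ℓ)}] = -μ₂/(n-2)` provided all row sums
of `b` vanish. -/
theorem stmt6 (n : ℕ) (hn : 3 ≤ n)
    (b : Fin n → Fin n → ℝ)
    (hb_rowsum : ∀ r : Fin n, ∑ s ∈ univ \ {r}, b r s = 0)
    (μ₂ : ℝ)
    (hμ₂ : μ₂ = (1 / ((n : ℝ) * (n - 1))) * ∑ r : Fin n, ∑ s ∈ univ \ {r}, (b r s) ^ 2)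
    (i j ℓ : Fin n) (hij : i ≠ j) (hiℓ : i ≠ ℓ) (hjℓ : j ≠ ℓ) :
    permE n (fun π => b (π i) (π j) * b (π i) (π ℓ)) = -μ₂ / ((n : ℝ) - 2) := by
  simp only [← compl_eq_univ_sdiff] at hb_rowsum hμ₂
  simpa [permE_eq_expect, hμ₂, sq] using stmt6_general b b hb_rowsum hij hiℓ hjℓ
end

section
/- Let π be a uniformly distributed random permutation of {1,…,n}. Then there exists a constant C > 0 depending only on K such that for all n ≥ 2 and all h₂ ∈ (0,1), | Var(b̄_{π(1)}) − 1/45 | ≤ C·(h₂ + 1/n), where Var(b̄_{π(1)}) = (1/n) Σ_{i=1}^n b̄_i² − ((1/n) Σ_{i=1}^n b̄_i)². -/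
open Finset MeasureTheory

/-- The cumulative distribution function `K̄(x) = ∫_{-∞}^x K(t) dt` of the kernel `K`. -/
noncomputable def kbar (K : ℝ → ℝ) (x : ℝ) : ℝ := ∫ t in Set.Iic x, K t

/-- `B_{ij} = ∫₀¹ K̄((v - i/n)/h₂) K̄((v - j/n)/h₂) dv` (indices `1 ≤ i, j ≤ n`). -/
noncomputable def BCoef (K : ℝ → ℝ) (n : ℕ) (h₂ : ℝ) (i j : ℕ) : ℝ :=
  ∫ v in (0:ℝ)..1, kbar K ((v - i / n) / h₂) * kbar K ((v - j / n) / h₂)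

/-- `b̄_i = (1/(n-1)) ∑_{k ≠ i} B_{ik}`. -/
noncomputable def bbar (K : ℝ → ℝ) (n : ℕ) (h₂ : ℝ) (i : ℕ) : ℝ :=
  (1 / ((n : ℝ) - 1)) * ∑ k ∈ Finset.Icc 1 n, if k ≠ i then BCoef K n h₂ i k else 0

/-!
As `h → 0`, `v ↦ K̄((v - a) / h)` tends to the unit step at `a`, and the `L¹` distance between the
two is `h` times `∫ |K̄ - 𝟙_{(0, ∞)}|`, which is finite by Fubini because `K` has a first moment.
Hence `B_{ik} = 1 - max (i/n) (k/n) + O(h)`, and averaging over `k ≠ i` gives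
`b̄_i = (1 - (i/n)²) / 2 + O(h + 1/n)`. The variance of `(1 - U²) / 2` for `U` uniform on the grid
`{1/n, …, n/n}` is a quotient of explicit power sums, equal to `1/45 + O(1/n)`.
-/

open scoped BigOperators

section UnitStep

/-- The unit step `𝟙_{(a, ∞)}`, the limit of `v ↦ K̄((v - a) / h)` as `h → 0⁺`. With the value `0`
at the jump, the product of two steps, the difference of two steps and the integral of a step over
`(0, 1]` are all read off from half-open intervals. -/
noncomputable def unitStep (a v : ℝ) : ℝ := (Set.Ioi a).indicator 1 v

lemma abs_unitStep_le_one (a v : ℝ) : |unitStep a v| ≤ 1 := by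
  by_cases hv : v ∈ Set.Ioi a <;> simp [unitStep, hv]

lemma measurable_unitStep (a : ℝ) : Measurable (unitStep a) :=
  measurable_one.indicator measurableSet_Ioi

lemma unitStep_mul_unitStep (a b v : ℝ) :
    unitStep a v * unitStep b v = unitStep (max a b) v := by
  simp only [unitStep, ← Set.Ioi_inter_Ioi, Set.inter_indicator_one, Pi.mul_apply]

lemma unitStep_zero_sub_div {h : ℝ} (hh : 0 < h) (a v : ℝ) :
    unitStep 0 ((v - a) / h) = unitStep a v := by
  simp only [unitStep, Set.indicator_apply, Set.mem_Ioi, div_pos_iff_of_pos_right hh, sub_pos,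
    Pi.one_apply]

lemma abs_unitStep_sub_unitStep (a b v : ℝ) :
    |unitStep a v - unitStep b v| = (Set.uIoc a b).indicator 1 v := by
  by_cases ha : a < v <;> by_cases hb : b < v <;>
    simp [unitStep, Set.mem_uIoc, ha, hb, not_lt.1, not_le.2]

lemma integral_unitStep {a : ℝ} (ha : a ∈ Set.Icc (0 : ℝ) 1) :
    ∫ v in (0 : ℝ)..1, unitStep a v = 1 - a := by
  rw [intervalIntegral.integral_of_le zero_le_one]
  simp only [unitStep]
  rw [setIntegral_indicator measurableSet_Ioi, Set.Ioc_inter_Ioi, max_eq_right ha.1]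
  simp [ha.2]

end UnitStep

section Kernel

variable {K : ℝ → ℝ}

lemma abs_kbar_le (hK : Integrable K) (x : ℝ) : |kbar K x| ≤ ∫ t, |K t| :=
  (norm_integral_le_integral_norm _).trans <|
    setIntegral_le_integral hK.norm (.of_forall fun _ => norm_nonneg _)

lemma kbar_eq_integral_mul_unitStep (x : ℝ) : kbar K x = ∫ t, K t * unitStep t x := by
  rw [kbar, integral_Iic_eq_integral_Iio, ← integral_indicator measurableSet_Iio]
  congr with t
  by_cases ht : t < x <;> simp [unitStep, ht]

lemma integrable_mul_unitStep_sub_unitStep (hK : Integrable K) (hK' : Integrable fun t => t * K t) :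
    Integrable fun p : ℝ × ℝ => K p.2 * (unitStep p.2 p.1 - unitStep 0 p.1) := by
  have section_norm (x t : ℝ) : ‖K t * (unitStep t x - unitStep 0 x)‖
      = (Set.uIoc t 0).indicator (fun _ => |K t|) x := by
    rw [norm_mul, Real.norm_eq_abs, Real.norm_eq_abs, abs_unitStep_sub_unitStep]
    by_cases hx : x ∈ Set.uIoc t 0 <;> simp [hx]
  have hstep : Measurable fun p : ℝ × ℝ => unitStep p.2 p.1 :=
    measurable_one.indicator (measurableSet_lt measurable_snd measurable_fst)
  have hmeas : AEStronglyMeasurable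
      (fun p : ℝ × ℝ => K p.2 * (unitStep p.2 p.1 - unitStep 0 p.1)) :=
    hK.aestronglyMeasurable.comp_snd.mul
      (hstep.sub ((measurable_unitStep 0).comp measurable_fst)).aestronglyMeasurable
  refine (integrable_prod_iff' hmeas).2 ⟨.of_forall fun t => ?_, ?_⟩
  · refine (integrable_norm_iff ?_).1 ?_
    · exact (((measurable_unitStep t).sub (measurable_unitStep 0)).const_mul
        (K t)).aestronglyMeasurable
    · simp only [section_norm]
      exact (integrable_indicator_iff measurableSet_uIoc).2 (integrableOn_const (by simp))
  · refine hK'.norm.congr (.of_forall fun t => ?_)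
    simp [section_norm, integral_indicator measurableSet_uIoc, measureReal_def]

lemma integrable_kbar_sub_unitStep (hK : ∫ t, K t = 1) (hK' : Integrable fun t => t * K t) :
    Integrable fun x => kbar K x - unitStep 0 x := by
  have hKint : Integrable K := integrable_of_integral_eq_one hK
  refine (integrable_mul_unitStep_sub_unitStep hKint hK').integral_prod_left.congr
    (.of_forall fun x => ?_)
  have hstep : Integrable fun t => K t * unitStep t x := by
    refine hKint.mul_bdd (c := 1) ?_ (.of_forall fun t => abs_unitStep_le_one t x)
    exact (measurable_one.indicator measurableSet_Iio).aestronglyMeasurable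
  simp only [mul_sub]
  rw [integral_sub hstep (hKint.mul_const _), integral_mul_const, hK, one_mul,
    kbar_eq_integral_mul_unitStep]

lemma integrable_id_mul_of_support_subset_Icc {r : ℝ} (hK : Integrable K)
    (hsupp : ∀ x, x ∉ Set.Icc (-r) r → K x = 0) : Integrable fun t => t * K t := by
  refine (hK.const_mul r).mono (by fun_prop) (.of_forall fun t => ?_)
  by_cases ht : t ∈ Set.Icc (-r) r
  · rw [norm_mul, norm_mul]
    gcongr
    exact (abs_le.2 ht).trans (le_abs_self r)
  · simp [hsupp t ht]

end Kernel

section SmoothedStep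

variable {F : ℝ → ℝ} {M h : ℝ}

lemma integrable_comp_sub_div_sub_unitStep (hF : Integrable fun x => F x - unitStep 0 x)
    (hh : 0 < h) (a : ℝ) : Integrable fun v => F ((v - a) / h) - unitStep a v := by
  simpa only [unitStep_zero_sub_div hh] using (hF.comp_div hh.ne').comp_sub_right a

lemma integral_abs_comp_sub_div_sub_unitStep (F : ℝ → ℝ) (hh : 0 < h) (a : ℝ) :
    ∫ v, |F ((v - a) / h) - unitStep a v| = h * ∫ x, |F x - unitStep 0 x| := by
  have hscale := Measure.integral_comp_div (fun x => |F x - unitStep 0 x|) h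
  rw [← integral_sub_right_eq_self _ a, abs_of_pos hh, smul_eq_mul] at hscale
  simpa only [unitStep_zero_sub_div hh] using hscale

lemma abs_mul_sub_mul_le {x y s t : ℝ} (hy : |y| ≤ M) (hs : |s| ≤ 1) :
    |x * y - s * t| ≤ M * |x - s| + |y - t| :=
  calc |x * y - s * t| = |y * (x - s) + s * (y - t)| := by ring_nf
    _ ≤ |y| * |x - s| + |s| * |y - t| := by
      simpa only [abs_mul] using abs_add_le (y * (x - s)) (s * (y - t))
    _ ≤ M * |x - s| + 1 * |y - t| := by gcongr
    _ = M * |x - s| + |y - t| := by rw [one_mul]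

lemma aestronglyMeasurable_comp_sub_div (hF : Integrable fun x => F x - unitStep 0 x)
    (hh : 0 < h) (a : ℝ) : AEStronglyMeasurable fun v => F ((v - a) / h) := by
  simpa only [sub_add_cancel] using
    (integrable_comp_sub_div_sub_unitStep hF hh a).aestronglyMeasurable.fun_add
      (measurable_unitStep a).aestronglyMeasurable

lemma abs_mul_sub_unitStep_max_le (hFM : ∀ x, |F x| ≤ M) (h a b v : ℝ) :
    |F ((v - a) / h) * F ((v - b) / h) - unitStep (max a b) v|
      ≤ M * |F ((v - a) / h) - unitStep a v| + |F ((v - b) / h) - unitStep b v| := by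
  rw [← unitStep_mul_unitStep]
  exact abs_mul_sub_mul_le (hFM _) (abs_unitStep_le_one a v)

lemma integrable_mul_sub_unitStep_max (hF : Integrable fun x => F x - unitStep 0 x)
    (hFM : ∀ x, |F x| ≤ M) (hh : 0 < h) (a b : ℝ) :
    Integrable fun v => F ((v - a) / h) * F ((v - b) / h) - unitStep (max a b) v :=
  (((integrable_comp_sub_div_sub_unitStep hF hh a).abs.const_mul M).add
    (integrable_comp_sub_div_sub_unitStep hF hh b).abs).mono'
    (((aestronglyMeasurable_comp_sub_div hF hh a).mul
      (aestronglyMeasurable_comp_sub_div hF hh b)).sub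
        (measurable_unitStep _).aestronglyMeasurable)
    (.of_forall (abs_mul_sub_unitStep_max_le hFM h a b))

lemma integral_abs_mul_sub_unitStep_max_le (hF : Integrable fun x => F x - unitStep 0 x)
    (hFM : ∀ x, |F x| ≤ M) (hh : 0 < h) (a b : ℝ) :
    ∫ v, |F ((v - a) / h) * F ((v - b) / h) - unitStep (max a b) v|
      ≤ (M + 1) * (∫ x, |F x - unitStep 0 x|) * h := by
  have ha := (integrable_comp_sub_div_sub_unitStep hF hh a).abs.const_mul M
  have hb := (integrable_comp_sub_div_sub_unitStep hF hh b).abs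
  calc ∫ v, |F ((v - a) / h) * F ((v - b) / h) - unitStep (max a b) v|
      ≤ ∫ v, M * |F ((v - a) / h) - unitStep a v| + |F ((v - b) / h) - unitStep b v| :=
        integral_mono (integrable_mul_sub_unitStep_max hF hFM hh a b).abs (ha.add hb)
          (abs_mul_sub_unitStep_max_le hFM h a b)
    _ = M * (h * ∫ x, |F x - unitStep 0 x|) + h * ∫ x, |F x - unitStep 0 x| := by
        rw [integral_add ha hb, integral_const_mul, integral_abs_comp_sub_div_sub_unitStep F hh,
          integral_abs_comp_sub_div_sub_unitStep F hh]
    _ = (M + 1) * (∫ x, |F x - unitStep 0 x|) * h := by ring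

lemma abs_integral_mul_sub_one_sub_max_le (hF : Integrable fun x => F x - unitStep 0 x)
    (hFM : ∀ x, |F x| ≤ M) (hh : 0 < h) {a b : ℝ} (ha : a ∈ Set.Icc (0 : ℝ) 1)
    (hb : b ∈ Set.Icc (0 : ℝ) 1) :
    |(∫ v in (0 : ℝ)..1, F ((v - a) / h) * F ((v - b) / h)) - (1 - max a b)|
      ≤ (M + 1) * (∫ x, |F x - unitStep 0 x|) * h := by
  have hint := integrable_mul_sub_unitStep_max hF hFM hh a b
  have hstep : IntervalIntegrable (unitStep (max a b)) volume 0 1 :=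
    intervalIntegrable_const.mono_fun' (g := fun _ => (1 : ℝ))
      (measurable_unitStep _).aestronglyMeasurable (.of_forall (abs_unitStep_le_one _))
  have hprod : IntervalIntegrable (fun v => F ((v - a) / h) * F ((v - b) / h)) volume 0 1 := by
    simpa using hint.intervalIntegrable.add hstep
  calc |(∫ v in (0 : ℝ)..1, F ((v - a) / h) * F ((v - b) / h)) - (1 - max a b)|
      = |∫ v in (0 : ℝ)..1, F ((v - a) / h) * F ((v - b) / h) - unitStep (max a b) v| := by
        rw [intervalIntegral.integral_sub hprod hstep,
          integral_unitStep ⟨ha.1.trans (le_max_left a b), max_le ha.2 hb.2⟩]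
    _ ≤ ∫ v in (0 : ℝ)..1, |F ((v - a) / h) * F ((v - b) / h) - unitStep (max a b) v| :=
        intervalIntegral.abs_integral_le_integral_abs zero_le_one
    _ ≤ ∫ v, |F ((v - a) / h) * F ((v - b) / h) - unitStep (max a b) v| := by
        rw [intervalIntegral.integral_of_le zero_le_one]
        exact setIntegral_le_integral hint.abs (.of_forall fun v => abs_nonneg _)
    _ ≤ (M + 1) * (∫ x, |F x - unitStep 0 x|) * h :=
        integral_abs_mul_sub_unitStep_max_le hF hFM hh a b

end SmoothedStep

section BCoef

variable {K : ℝ → ℝ} {n i k : ℕ} {h M : ℝ}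

lemma div_natCast_mem_Icc (hi : i ≤ n) : (i / n : ℝ) ∈ Set.Icc (0 : ℝ) 1 :=
  ⟨by positivity, div_le_one_of_le₀ (by exact_mod_cast hi) n.cast_nonneg⟩

lemma abs_BCoef_le (hM : ∀ x, |kbar K x| ≤ M) (n : ℕ) (h : ℝ) (i k : ℕ) :
    |BCoef K n h i k| ≤ M ^ 2 := by
  have hle := intervalIntegral.norm_integral_le_of_norm_le_const (a := (0 : ℝ)) (b := 1)
    (C := M ^ 2) (f := fun v => kbar K ((v - i / n) / h) * kbar K ((v - k / n) / h)) fun v _ => by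
      rw [norm_mul, sq]
      exact mul_le_mul (hM _) (hM _) (abs_nonneg _) ((abs_nonneg _).trans (hM 0))
  simpa [BCoef] using hle

lemma abs_BCoef_sub_le (hF : Integrable fun x => kbar K x - unitStep 0 x)
    (hM : ∀ x, |kbar K x| ≤ M) (hh : 0 < h) (hi : i ≤ n) (hk : k ≤ n) :
    |BCoef K n h i k - (1 - max (i / n : ℝ) (k / n))|
      ≤ (M + 1) * (∫ x, |kbar K x - unitStep 0 x|) * h :=
  abs_integral_mul_sub_one_sub_max_le hF hM hh (div_natCast_mem_Icc hi) (div_natCast_mem_Icc hk)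

end BCoef

section Expect

variable {ι : Type*} {s : Finset ι} {f g : ι → ℝ} {ε S : ℝ}

lemma one_div_mul_sum_Icc_eq_expect (n : ℕ) (f : ℕ → ℝ) :
    (1 / (n : ℝ)) * ∑ i ∈ Icc 1 n, f i = 𝔼 i ∈ Icc 1 n, f i := by
  rw [expect_eq_sum_div_card, Nat.card_Icc, Nat.add_sub_cancel, one_div, inv_mul_eq_div]

lemma abs_expect_le_of_forall_abs_le (hs : s.Nonempty) (hf : ∀ i ∈ s, |f i| ≤ ε) :
    |𝔼 i ∈ s, f i| ≤ ε :=
  (abs_expect_le s f).trans (expect_le hs hf)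

/-- The variance of `f X` for `X` uniformly distributed on `s`. -/
noncomputable def uniformVariance (s : Finset ι) (f : ι → ℝ) : ℝ :=
  𝔼 i ∈ s, f i ^ 2 - (𝔼 i ∈ s, f i) ^ 2

-- The right-hand side is `Cov (f - g, f + g)`.
lemma uniformVariance_sub_uniformVariance (s : Finset ι) (f g : ι → ℝ) :
    uniformVariance s f - uniformVariance s g
      = 𝔼 i ∈ s, (f i - g i) * (f i + g i)
        - (𝔼 i ∈ s, (f i - g i)) * 𝔼 i ∈ s, (f i + g i) := by
  have hsq (i : ι) : (f i - g i) * (f i + g i) = f i ^ 2 - g i ^ 2 := by ring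
  simp only [uniformVariance, hsq, expect_sub_distrib, expect_add_distrib]
  ring

lemma abs_uniformVariance_sub_le (hs : s.Nonempty) (hsub : ∀ i ∈ s, |f i - g i| ≤ ε)
    (hadd : ∀ i ∈ s, |f i + g i| ≤ S) :
    |uniformVariance s f - uniformVariance s g| ≤ 2 * (ε * S) := by
  have hε : 0 ≤ ε := let ⟨i, hi⟩ := hs; (abs_nonneg _).trans (hsub i hi)
  have hprod : |𝔼 i ∈ s, (f i - g i) * (f i + g i)| ≤ ε * S :=
    abs_expect_le_of_forall_abs_le hs fun i hi => by
      rw [abs_mul]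
      exact mul_le_mul (hsub i hi) (hadd i hi) (abs_nonneg _) hε
  have hmeans : |(𝔼 i ∈ s, (f i - g i)) * 𝔼 i ∈ s, (f i + g i)| ≤ ε * S := by
    rw [abs_mul]
    exact mul_le_mul (abs_expect_le_of_forall_abs_le hs hsub)
      (abs_expect_le_of_forall_abs_le hs hadd) (abs_nonneg _) hε
  rw [uniformVariance_sub_uniformVariance, two_mul]
  exact (abs_sub _ _).trans (add_le_add hprod hmeans)

lemma uniformVariance_sub_mul (hs : s.Nonempty) (a c : ℝ) (f : ι → ℝ) :
    uniformVariance s (fun i => a - c * f i) = c ^ 2 * uniformVariance s f := by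
  have hsq (i : ι) : (a - c * f i) ^ 2 = a ^ 2 - 2 * a * c * f i + c ^ 2 * f i ^ 2 := by ring
  simp only [uniformVariance, hsq, expect_sub_distrib, expect_add_distrib, ← mul_expect,
    expect_const hs]
  ring

end Expect

section Grid

variable {n i : ℕ}

lemma sum_Icc_sq (n : ℕ) : ∑ i ∈ Icc 1 n, (i : ℝ) ^ 2 = n * (n + 1) * (2 * n + 1) / 6 := by
  induction n with
  | zero => simp
  | succ m ih =>
    rw [sum_Icc_succ_top (by omega), ih]
    push_cast
    ring

lemma sum_Icc_pow_four (n : ℕ) :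
    ∑ i ∈ Icc 1 n, (i : ℝ) ^ 4
      = n * (n + 1) * (2 * n + 1) * (3 * (n : ℝ) ^ 2 + 3 * n - 1) / 30 := by
  induction n with
  | zero => simp
  | succ m ih =>
    rw [sum_Icc_succ_top (by omega), ih]
    push_cast
    ring

lemma uniformVariance_Icc_sq (hn : n ≠ 0) :
    uniformVariance (Icc 1 n) (fun i => (i : ℝ) ^ 2)
      = ((n : ℝ) ^ 2 - 1) * (2 * n + 1) * (8 * n + 11) / 180 := by
  simp only [uniformVariance, ← pow_mul, Nat.reduceMul, ← one_div_mul_sum_Icc_eq_expect,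
    sum_Icc_sq, sum_Icc_pow_four]
  field_simp
  ring

lemma abs_uniformVariance_grid_sub_le (hn : n ≠ 0) :
    |uniformVariance (Icc 1 n) (fun i => (1 - (i / n : ℝ) ^ 2) / 2) - 1 / 45| ≤ 1 / n := by
  have hn1 : (1 : ℝ) ≤ n := by exact_mod_cast Nat.one_le_iff_ne_zero.2 hn
  have haffine : (fun i : ℕ => (1 - (i / n : ℝ) ^ 2) / 2)
      = fun i : ℕ => 1 / 2 - 1 / (2 * (n : ℝ) ^ 2) * (i : ℝ) ^ 2 := by
    ext i
    ring
  have hexact : uniformVariance (Icc 1 n) (fun i => (1 - (i / n : ℝ) ^ 2) / 2) - 1 / 45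
      = (30 * (n : ℝ) ^ 3 - 5 * n ^ 2 - 30 * n - 11) / (720 * n ^ 4) := by
    rw [haffine, uniformVariance_sub_mul (nonempty_Icc.2 (Nat.one_le_iff_ne_zero.2 hn)),
      uniformVariance_Icc_sq hn]
    field_simp
    ring
  have hsq : (n : ℝ) ^ 2 ≤ n ^ 3 := pow_le_pow_right₀ hn1 (by norm_num)
  have hone : (n : ℝ) ≤ n ^ 3 := le_self_pow₀ hn1 (by norm_num)
  have hnum : |30 * (n : ℝ) ^ 3 - 5 * n ^ 2 - 30 * n - 11| ≤ 720 * (n : ℝ) ^ 3 :=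
    abs_le.2 ⟨by linarith, by linarith [sq_nonneg (n : ℝ)]⟩
  calc |uniformVariance (Icc 1 n) (fun i => (1 - (i / n : ℝ) ^ 2) / 2) - 1 / 45|
      = |30 * (n : ℝ) ^ 3 - 5 * n ^ 2 - 30 * n - 11| / (720 * n ^ 4) := by
        rw [hexact, abs_div, abs_of_nonneg (by positivity : (0 : ℝ) ≤ 720 * n ^ 4)]
    _ ≤ 720 * n ^ 3 / (720 * n ^ 4) := by gcongr
    _ = 1 / n := by field_simp

lemma sum_Icc_max (hi : i ≤ n) :
    ∑ k ∈ Icc 1 n, max (i : ℝ) k = ((n : ℝ) ^ 2 + n + i ^ 2 - i) / 2 := by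
  induction n, hi using Nat.le_induction with
  | base =>
    have hmax : ∀ k ∈ Icc 1 i, max (i : ℝ) k = i := fun k hk =>
      max_eq_left (by exact_mod_cast (mem_Icc.1 hk).2)
    rw [sum_congr rfl hmax, sum_const, Nat.card_Icc, nsmul_eq_mul, Nat.add_sub_cancel]
    ring
  | succ m hm ih =>
    rw [sum_Icc_succ_top (by omega), ih, max_eq_right (by exact_mod_cast hm.trans m.le_succ)]
    push_cast
    ring

lemma cast_card_erase_Icc (hi : i ∈ Icc 1 n) : (#((Icc 1 n).erase i) : ℝ) = n - 1 := by
  have hn : 1 ≤ n := (mem_Icc.1 hi).1.trans (mem_Icc.1 hi).2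
  rw [card_erase_of_mem hi, Nat.card_Icc, Nat.add_sub_cancel, Nat.cast_sub hn, Nat.cast_one]

lemma erase_Icc_nonempty (hn : 2 ≤ n) : ((Icc 1 n).erase i).Nonempty :=
  (one_lt_card_iff_nontrivial.1 (by rw [Nat.card_Icc]; omega)).erase_nonempty

lemma expect_erase_one_sub_max (hn : 2 ≤ n) (hi : i ∈ Icc 1 n) :
    𝔼 k ∈ (Icc 1 n).erase i, (1 - max (i / n : ℝ) (k / n))
      = (1 - (i / n : ℝ) ^ 2) / 2 - (1 - i / n) * (2 - i / n) / (2 * (n - 1)) := by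
  have hn2 : (2 : ℝ) ≤ n := by exact_mod_cast hn
  have hn0 : (n : ℝ) ≠ 0 := by linarith
  have hn1 : (n : ℝ) - 1 ≠ 0 := by linarith
  have hfull : ∑ k ∈ Icc 1 n, (1 - max (i / n : ℝ) (k / n))
      = n - ((n : ℝ) ^ 2 + n + i ^ 2 - i) / 2 / n := by
    simp only [max_div_div_right n.cast_nonneg, sum_sub_distrib, ← sum_div,
      sum_Icc_max (mem_Icc.1 hi).2]
    simp
  rw [expect_eq_sum_div_card, cast_card_erase_Icc hi, sum_erase_eq_sub hi, hfull, max_self]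
  field_simp
  ring

lemma abs_expect_erase_one_sub_max_sub_le (hn : 2 ≤ n) (hi : i ∈ Icc 1 n) :
    |𝔼 k ∈ (Icc 1 n).erase i, (1 - max (i / n : ℝ) (k / n)) - (1 - (i / n : ℝ) ^ 2) / 2|
      ≤ (2 / n : ℝ) := by
  have hn2 : (2 : ℝ) ≤ n := by exact_mod_cast hn
  obtain ⟨hx0, hx1⟩ := div_natCast_mem_Icc (mem_Icc.1 hi).2
  rw [expect_erase_one_sub_max hn hi, sub_sub_cancel_left, abs_neg, abs_of_nonneg
    (div_nonneg (mul_nonneg (by linarith) (by linarith)) (by linarith)),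
    div_le_div_iff₀ (by linarith) (by linarith)]
  nlinarith [mul_nonneg hx0 (sub_nonneg.2 hx1)]

end Grid

section Bbar

variable {K : ℝ → ℝ} {n i : ℕ} {h M : ℝ}

lemma bbar_eq_expect_erase (K : ℝ → ℝ) (h : ℝ) (hi : i ∈ Icc 1 n) :
    bbar K n h i = 𝔼 k ∈ (Icc 1 n).erase i, BCoef K n h i k := by
  rw [bbar, ← sum_filter, filter_ne', expect_eq_sum_div_card, cast_card_erase_Icc hi, one_div,
    inv_mul_eq_div]

lemma abs_bbar_le (hM : ∀ x, |kbar K x| ≤ M) (hn : 2 ≤ n) (hi : i ∈ Icc 1 n) :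
    |bbar K n h i| ≤ M ^ 2 := by
  rw [bbar_eq_expect_erase K h hi]
  exact abs_expect_le_of_forall_abs_le (erase_Icc_nonempty hn) fun k _ => abs_BCoef_le hM n h i k

lemma abs_bbar_sub_le (hF : Integrable fun x => kbar K x - unitStep 0 x)
    (hM : ∀ x, |kbar K x| ≤ M) (hh : 0 < h) (hn : 2 ≤ n) (hi : i ∈ Icc 1 n) :
    |bbar K n h i - (1 - (i / n : ℝ) ^ 2) / 2|
      ≤ (M + 1) * (∫ x, |kbar K x - unitStep 0 x|) * h + 2 / n := by
  refine (abs_sub_le _ (𝔼 k ∈ (Icc 1 n).erase i, (1 - max (i / n : ℝ) (k / n))) _).trans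
    (add_le_add ?_ (abs_expect_erase_one_sub_max_sub_le hn hi))
  rw [bbar_eq_expect_erase K h hi, ← expect_sub_distrib]
  exact abs_expect_le_of_forall_abs_le (erase_Icc_nonempty hn) fun k hk =>
    abs_BCoef_sub_le hF hM hh (mem_Icc.1 hi).2 (mem_Icc.1 (mem_of_mem_erase hk)).2

lemma abs_uniformVariance_bbar_sub_le (hF : Integrable fun x => kbar K x - unitStep 0 x)
    (hM : ∀ x, |kbar K x| ≤ M) (hh : 0 < h) (hn : 2 ≤ n) :
    |uniformVariance (Icc 1 n) (bbar K n h) - 1 / 45|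
      ≤ 2 * (((M + 1) * (∫ x, |kbar K x - unitStep 0 x|) * h + 2 / n) * (M ^ 2 + 1)) + 1 / n := by
  refine (abs_sub_le _ (uniformVariance (Icc 1 n) fun i => (1 - (i / n : ℝ) ^ 2) / 2) _).trans
    (add_le_add ?_ (abs_uniformVariance_grid_sub_le (by omega)))
  refine abs_uniformVariance_sub_le (nonempty_Icc.2 (by omega))
    (fun i hi => abs_bbar_sub_le hF hM hh hn hi) fun i hi => ?_
  obtain ⟨hx0, hx1⟩ := div_natCast_mem_Icc (mem_Icc.1 hi).2
  have hlimit : |(1 - (i / n : ℝ) ^ 2) / 2| ≤ 1 :=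
    abs_le.2 ⟨by nlinarith, by nlinarith⟩
  exact (abs_add_le _ _).trans (add_le_add (abs_bbar_le hM hn hi) hlimit)

end Bbar

theorem stmt11_general (K : ℝ → ℝ) (hK : ∫ t, K t = 1) (hK' : Integrable fun t => t * K t) :
    ∃ C > 0, ∀ n : ℕ, 2 ≤ n → ∀ h > 0,
      |((1 / (n : ℝ)) * ∑ i ∈ Icc 1 n, (bbar K n h i) ^ 2
          - ((1 / (n : ℝ)) * ∑ i ∈ Icc 1 n, bbar K n h i) ^ 2)
        - 1 / 45| ≤ C * (h + 1 / n) := by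
  have hM := abs_kbar_le (integrable_of_integral_eq_one hK)
  have hM0 : 0 ≤ ∫ t, |K t| := integral_nonneg fun t => abs_nonneg _
  have hJ0 : 0 ≤ ∫ x, |kbar K x - unitStep 0 x| := integral_nonneg fun x => abs_nonneg _
  set M := ∫ t, |K t|
  set J := ∫ x, |kbar K x - unitStep 0 x|
  refine ⟨2 * ((M + 1) * J + 2) * (M ^ 2 + 1) + 1, by positivity, fun n hn h hh => ?_⟩
  rw [one_div_mul_sum_Icc_eq_expect, one_div_mul_sum_Icc_eq_expect]
  refine (abs_uniformVariance_bbar_sub_le (integrable_kbar_sub_unitStep hK hK') hM hh hn).trans ?_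
  have hcross : 0 ≤ (M + 1) * J * (M ^ 2 + 1) * (1 / n) + 2 * (M ^ 2 + 1) * h := by positivity
  calc 2 * (((M + 1) * J * h + 2 / n) * (M ^ 2 + 1)) + 1 / n
      ≤ 2 * (((M + 1) * J * h + 2 / n) * (M ^ 2 + 1)) + 1 / n
        + (2 * ((M + 1) * J * (M ^ 2 + 1) * (1 / n) + 2 * (M ^ 2 + 1) * h) + h) := by linarith
    _ = (2 * ((M + 1) * J + 2) * (M ^ 2 + 1) + 1) * (h + 1 / n) := by ring

/-- the variance of `b̄_{π(1)}` for a uniform random permutation `π`, namely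
`(1/n) ∑ᵢ b̄ᵢ² - ((1/n) ∑ᵢ b̄ᵢ)²`, satisfies `|Var(b̄_{π(1)}) - 1/45| ≤ C (h₂ + 1/n)` for a
constant `C` depending only on `K`. -/
theorem stmt11 (K : ℝ → ℝ)
    (hKcont : Continuous K) (hKsymm : ∀ x, K (-x) = K x)
    (hKnonneg : ∀ x, 0 ≤ K x) (hKint : ∫ x, K x = 1)
    (hKsupp : ∀ x, x ∉ Set.Icc (-1 : ℝ) 1 → K x = 0) :
    ∃ C > 0, ∀ n : ℕ, 2 ≤ n → ∀ h₂ ∈ Set.Ioo (0 : ℝ) 1,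
      |((1 / (n : ℝ)) * ∑ i ∈ Finset.Icc 1 n, (bbar K n h₂ i) ^ 2
          - ((1 / (n : ℝ)) * ∑ i ∈ Finset.Icc 1 n, bbar K n h₂ i) ^ 2)
        - 1 / 45| ≤ C * (h₂ + 1 / n) := by
  have hK1 := integrable_id_mul_of_support_subset_Icc (integrable_of_integral_eq_one hKint) hKsupp
  exact (stmt11_general K hKint hK1).imp fun C hC =>
    ⟨hC.1, fun n hn h hh => hC.2 n hn h hh.1⟩
end
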